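/- arXiv:2512.20911 — 5 statements merged into one kernel-verified Lean document; each statement's English description precedes it below -/
import Mathlib

section
/- Let N be a positive integer, let C̄ be a real N×N matrix, let v, w ∈ ℝ^N, and let α ∈ (0,1). Assume the spectral radius of the complexification of α • C̄ is strictly less than 1 (i.e., every complex eigenvalue of α • C̄ has modulus < 1). Then the series s := ∑_{k=0}^∞ α^k C̄^k v + ∑_{k=1}^∞ α^k (∑_{j=0}^{k-1} C̄^j) w converges absolutely, and s satisfies the fixed-point equation s - α • C̄ · s = v + (α/(1-α)) • w. -/
/-!
Put `A = α • Cb`. By Gelfand's formula, a spectral radius below `1` forces the powers of `A` to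
decay geometrically, so the Neumann series `G = ∑ A ^ k` converges absolutely and satisfies
`(1 - A) * G = 1`. The `k`-th matrix of the second series is
`α ^ (k + 1) • ∑_{j ≤ k} Cb ^ j = α • ∑_{j ≤ k} A ^ j * α ^ (k - j)`, that is, `α` times the
`k`-th term of the Cauchy product of `G` with the scalar geometric series of ratio `α`. Hence the
second series also converges absolutely, with matrix sum `(α / (1 - α)) • G`, and the total
`G *ᵥ (v + (α / (1 - α)) • w)` is sent to `v + (α / (1 - α)) • w` by `1 - A`.
-/

open Matrix

-- All matrix norms are operator norms for the sup norm on vectors.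
open scoped Matrix.Norms.Operator ENNReal NNReal

/-- Root test through Gelfand's formula, in any complex Banach algebra. -/
lemma summable_norm_pow_of_spectralRadius_lt_one {A : Type*} [NormedRing A] [NormedAlgebra ℂ A]
    [CompleteSpace A] (a : A) (ha : spectralRadius ℂ a < 1) :
    Summable (fun k : ℕ => ‖a ^ k‖) := by
  obtain ⟨r, har, hr1⟩ := ENNReal.lt_iff_exists_nnreal_btwn.mp ha
  have hr : r < 1 := by exact_mod_cast hr1
  have hev := (spectrum.pow_nnnorm_pow_one_div_tendsto_nhds_spectralRadius a).eventually_lt_const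
    har
  refine Summable.of_norm_bounded_eventually_nat
    (summable_geometric_of_lt_one r.coe_nonneg (by exact_mod_cast hr)) ?_
  filter_upwards [hev, Filter.eventually_gt_atTop 0] with n hn hn0
  have hn0' : (n : ℝ) ≠ 0 := by positivity
  have h := ENNReal.rpow_le_rpow hn.le (z := (n : ℝ)) (by positivity)
  rw [← ENNReal.rpow_mul, one_div, inv_mul_cancel₀ hn0', ENNReal.rpow_one,
    ENNReal.rpow_natCast] at h
  have h' : ‖a ^ n‖₊ ≤ r ^ n := by exact_mod_cast h
  rw [norm_norm]
  exact_mod_cast h'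

lemma norm_map_ofReal {N : ℕ} (M : Matrix (Fin N) (Fin N) ℝ) :
    ‖M.map Complex.ofReal‖ = ‖M‖ := by
  simp [Matrix.linfty_opNorm_def]

lemma summable_norm_mulVec {N : ℕ} {f : ℕ → Matrix (Fin N) (Fin N) ℝ}
    (hf : Summable fun k => ‖f k‖) (x : Fin N → ℝ) : Summable fun k => ‖f k *ᵥ x‖ :=
  Summable.of_nonneg_of_le (fun _ => norm_nonneg _)
    (fun k => Matrix.linfty_opNorm_mulVec (f k) x) (hf.mul_right ‖x‖)

lemma tsum_mulVec {N : ℕ} {f : ℕ → Matrix (Fin N) (Fin N) ℝ} (hf : Summable f)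
    (x : Fin N → ℝ) : ∑' k, f k *ᵥ x = (∑' k, f k) *ᵥ x := by
  let φ : Matrix (Fin N) (Fin N) ℝ →+ (Fin N → ℝ) :=
    { toFun := fun M => M *ᵥ x
      map_zero' := Matrix.zero_mulVec x
      map_add' := fun M M' => Matrix.add_mulVec M M' x }
  have hφ : Continuous φ := continuous_id.matrix_mulVec continuous_const
  exact (hf.hasSum.map φ hφ).tsum_eq

theorem discounted_series_fixed_point {N : ℕ} (hN : 0 < N)
    (Cb : Matrix (Fin N) (Fin N) ℝ) (v w : Fin N → ℝ) (α : ℝ)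
    (hα : α ∈ Set.Ioo (0 : ℝ) 1)
    (hρ : spectralRadius ℂ ((α • Cb).map Complex.ofReal) < 1) :
    Summable (fun k : ℕ => ‖(α ^ k • Cb ^ k) *ᵥ v‖) ∧
    Summable (fun k : ℕ =>
      ‖(α ^ (k + 1) • ∑ j ∈ Finset.range (k + 1), Cb ^ j) *ᵥ w‖) ∧
    (∑' k : ℕ, (α ^ k • Cb ^ k) *ᵥ v) +
        (∑' k : ℕ, (α ^ (k + 1) • ∑ j ∈ Finset.range (k + 1), Cb ^ j) *ᵥ w) -
      α • (Cb *ᵥ ((∑' k : ℕ, (α ^ k • Cb ^ k) *ᵥ v) +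
        (∑' k : ℕ, (α ^ (k + 1) • ∑ j ∈ Finset.range (k + 1), Cb ^ j) *ᵥ w))) =
      v + (α / (1 - α)) • w := by
  obtain ⟨hα0, hα1⟩ := hα
  set A := α • Cb with hA
  have hpow : ∀ k, A ^ k = α ^ k • Cb ^ k := fun k => smul_pow α Cb k
  have hsA : Summable fun k : ℕ => ‖A ^ k‖ := by
    refine (summable_norm_pow_of_spectralRadius_lt_one _ hρ).congr fun k => ?_
    rw [← norm_map_ofReal]
    congr 1
    exact (map_pow Complex.ofRealHom.mapMatrix A k).symm
  -- The geometric series of ratio `α`, as scalar matrices.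
  have hsg : HasSum (fun k : ℕ => α ^ k • (1 : Matrix (Fin N) (Fin N) ℝ))
      ((1 - α)⁻¹ • (1 : Matrix (Fin N) (Fin N) ℝ)) :=
    (hasSum_geometric_of_lt_one hα0.le hα1).smul_const _
  have hsgn : Summable fun k : ℕ => ‖α ^ k • (1 : Matrix (Fin N) (Fin N) ℝ)‖ := by
    simp_rw [norm_smul]
    exact (summable_geometric_of_lt_one hα0.le hα1).norm.mul_right _
  have hterm : ∀ k : ℕ, α ^ (k + 1) • ∑ j ∈ Finset.range (k + 1), Cb ^ j =
      α • ∑ j ∈ Finset.range (k + 1),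
        A ^ j * α ^ (k - j) • (1 : Matrix (Fin N) (Fin N) ℝ) := by
    intro k
    rw [Finset.smul_sum, Finset.smul_sum]
    refine Finset.sum_congr rfl fun j hj => ?_
    have hjk : k + 1 = 1 + (k - j) + j := by
      have := Finset.mem_range.mp hj
      omega
    have hscal : α ^ (k + 1) = α * (α ^ (k - j) * α ^ j) := by
      rw [hjk, pow_add, pow_add, pow_one, mul_assoc]
    rw [hpow, mul_smul_comm, mul_one, smul_smul, smul_smul, hscal, mul_assoc]
  have hsT : Summable fun k : ℕ => ‖α ^ (k + 1) • ∑ j ∈ Finset.range (k + 1), Cb ^ j‖ := by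
    simp_rw [hterm, norm_smul]
    exact (summable_norm_sum_mul_range_of_summable_norm hsA hsgn).mul_left _
  have hT : ∑' k : ℕ, α ^ (k + 1) • ∑ j ∈ Finset.range (k + 1), Cb ^ j =
      (α / (1 - α)) • ∑' k : ℕ, A ^ k := by
    simp_rw [hterm]
    -- The product topology and the norm topology on matrices agree only definitionally, so the
    -- sums are rewritten with `Eq.trans`.
    refine (Summable.tsum_const_smul α
      (summable_norm_sum_mul_range_of_summable_norm hsA hsgn).of_norm).trans ?_
    rw [← tsum_mul_tsum_eq_tsum_sum_range_of_summable_norm hsA hsgn]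
    refine (congrArg (fun X => α • ((∑' k : ℕ, A ^ k) * X)) hsg.tsum_eq).trans ?_
    simp only [mul_smul_comm, mul_one, smul_smul, div_eq_mul_inv]
  simp_rw [← hpow]
  refine ⟨summable_norm_mulVec hsA v, summable_norm_mulVec hsT w, ?_⟩
  rw [tsum_mulVec hsA.of_norm, tsum_mulVec hsT.of_norm, hT]
  have hG : (1 - A) * ∑' k : ℕ, A ^ k = 1 := hsA.of_norm.one_sub_mul_tsum_pow
  generalize ∑' k : ℕ, A ^ k = G at hG ⊢
  have hs : G *ᵥ v + ((α / (1 - α)) • G) *ᵥ w = G *ᵥ (v + (α / (1 - α)) • w) := by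
    rw [Matrix.mulVec_add, Matrix.mulVec_smul, Matrix.smul_mulVec]
  rw [hs, ← Matrix.smul_mulVec, ← hA]
  generalize v + (α / (1 - α)) • w = u
  calc G *ᵥ u - A *ᵥ (G *ᵥ u) = ((1 - A) * G) *ᵥ u := by
        rw [← Matrix.mulVec_mulVec, Matrix.sub_mulVec, Matrix.one_mulVec]
    _ = u := by rw [hG, Matrix.one_mulVec]
end

section
/- Let n, m be positive integers, let F11 be a real symmetric n×n matrix, F12 a real n×m matrix, F22 a real symmetric m×m matrix, and M a real symmetric positive definite n×n matrix. If F22 has at least one negative eigenvalue (i.e., there exists a nonzero v ∈ ℝ^m with vᵀ F22 v < 0), then the function L ↦ Tr(M · (Lᵀ F22 L + Lᵀ F12ᵀ + F12 L + F11)) is unbounded from below: for every c ∈ ℝ there exists a real m×n matrix L with Tr(M · (Lᵀ F22 L + Lᵀ F12ᵀ + F12 L + F11)) < c. -/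
/-!
Restrict the function to a line of rank-one matrices `L = t • v eᵢᵀ`, where `vᵀ F22 v < 0` and `eᵢ`
is a standard basis vector. On it the trace is a quadratic polynomial in `t` whose leading
coefficient is `Tr (M eᵢ (vᵀ F22 v) eᵢᵀ) = (vᵀ F22 v) * M i i`. This is negative since the diagonal
entries of a positive definite matrix are positive, so the trace tends to `-∞` along the line.
-/

open Matrix

lemma exists_quadratic_lt {a : ℝ} (ha : a < 0) (b d c : ℝ) :
    ∃ t : ℝ, t ^ 2 * a + t * b + d < c := by
  -- This `t` is at least `1` and makes `t * a + b` at most `-(|d - c| + 1)`.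
  refine ⟨(|b| + |d - c| + 1) / (-a) + 1, ?_⟩
  set t := (|b| + |d - c| + 1) / (-a) + 1 with ht
  have h1 : 1 ≤ t := by
    have : 0 ≤ (|b| + |d - c| + 1) / (-a) := div_nonneg (by positivity) (by linarith)
    linarith
  have h2 : t * a = -(|b| + |d - c| + 1) + a := by
    rw [ht]
    field_simp [ha.ne]
  have h3 : t * a + b ≤ -(|d - c| + 1) := by linarith [le_abs_self b]
  have h4 : 0 ≤ |d - c| := abs_nonneg _
  nlinarith [le_abs_self (d - c)]

theorem trace_unbounded_below_of_neg_eigenvalue {n m : ℕ} (hn : 0 < n) (hm : 0 < m)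
    (F11 : Matrix (Fin n) (Fin n) ℝ) (hF11 : F11.IsSymm)
    (F12 : Matrix (Fin n) (Fin m) ℝ)
    (F22 : Matrix (Fin m) (Fin m) ℝ) (hF22 : F22.IsSymm)
    (M : Matrix (Fin n) (Fin n) ℝ) (hM : M.PosDef)
    (hneg : ∃ v : Fin m → ℝ, v ≠ 0 ∧ v ⬝ᵥ (F22 *ᵥ v) < 0) :
    ∀ c : ℝ, ∃ L : Matrix (Fin m) (Fin n) ℝ,
      (M * (Lᵀ * F22 * L + Lᵀ * F12ᵀ + F12 * L + F11)).trace < c := by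
  intro c
  obtain ⟨v, -, hv⟩ := hneg
  let i : Fin n := ⟨0, hn⟩
  let K : Matrix (Fin m) (Fin n) ℝ := vecMulVec v (Pi.single i 1)
  have hK : (M * (Kᵀ * F22 * K)).trace = (v ⬝ᵥ (F22 *ᵥ v)) * M i i := by
    rw [transpose_vecMulVec, vecMulVec_mul, vecMulVec_mul_vecMulVec, mul_vecMulVec,
      trace_vecMulVec, dotProduct_mulVec]
    simp
  have ha : (M * (Kᵀ * F22 * K)).trace < 0 := by
    rw [hK]
    exact mul_neg_of_neg_of_pos hv hM.diag_pos
  obtain ⟨t, ht⟩ := exists_quadratic_lt ha (M * (Kᵀ * F12ᵀ + F12 * K)).trace (M * F11).trace c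
  refine ⟨t • K, lt_of_eq_of_lt ?_ ht⟩
  simp only [transpose_smul, Matrix.smul_mul, Matrix.mul_smul, Matrix.mul_add, trace_add,
    trace_smul, smul_eq_mul]
  ring
end

section
/- Let n, m be positive integers, let F11 be a real symmetric n×n matrix, F12 a real n×m matrix, F22 a real symmetric positive semidefinite m×m matrix, and M a real symmetric positive definite n×n matrix. If there exists x ∈ ℝ^m with F22 x = 0 and F12 x ≠ 0 (i.e., the range of F12ᵀ is not contained in the range of F22), then the function L ↦ Tr(M · (Lᵀ F22 L + Lᵀ F12ᵀ + F12 L + F11)) is unbounded from below: for every c ∈ ℝ there exists a real m×n matrix L with Tr(M · (Lᵀ F22 L + Lᵀ F12ᵀ + F12 L + F11)) < c. -/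
/-!
Pick `x` in the kernel of `F22` with `y = F12 x ≠ 0` and move along the rank-one ray
`L = t • x yᵀ`. The quadratic term vanishes because `F22 L = 0`, while each of the two linear terms
equals `t • y yᵀ`. The objective is therefore `2 t (yᵀ M y) + Tr (M F11)`, an affine function of `t`
whose slope is positive because `M` is positive definite, so it tends to `-∞` as `t → -∞`.
-/

open Matrix

theorem trace_unbounded_below_of_range_not_contained {n m : ℕ} (hn : 0 < n) (hm : 0 < m)
    (F11 : Matrix (Fin n) (Fin n) ℝ) (hF11 : F11.IsSymm)
    (F12 : Matrix (Fin n) (Fin m) ℝ)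
    (F22 : Matrix (Fin m) (Fin m) ℝ) (hF22 : F22.PosSemidef)
    (M : Matrix (Fin n) (Fin n) ℝ) (hM : M.PosDef)
    (hx : ∃ x : Fin m → ℝ, F22 *ᵥ x = 0 ∧ F12 *ᵥ x ≠ 0) :
    ∀ c : ℝ, ∃ L : Matrix (Fin m) (Fin n) ℝ,
      (M * (Lᵀ * F22 * L + Lᵀ * F12ᵀ + F12 * L + F11)).trace < c := by
  intro c
  obtain ⟨x, hx0, hy⟩ := hx
  set y := F12 *ᵥ x with hydef
  have hpos : 0 < (M *ᵥ y) ⬝ᵥ y := by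
    have h := (posDef_iff_dotProduct_mulVec.mp hM).2 hy
    rwa [star_trivial, dotProduct_comm] at h
  have key : ∀ t : ℝ, (M * ((t • vecMulVec x y)ᵀ * F22 * (t • vecMulVec x y)
      + (t • vecMulVec x y)ᵀ * F12ᵀ + F12 * (t • vecMulVec x y) + F11)).trace
      = 2 * t * ((M *ᵥ y) ⬝ᵥ y) + (M * F11).trace := by
    intro t
    have h1 : F22 * (t • vecMulVec x y) = 0 := by
      rw [Matrix.mul_smul, mul_vecMulVec, hx0, zero_vecMulVec, smul_zero]
    have h2 : F12 * (t • vecMulVec x y) = t • vecMulVec y y := by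
      rw [Matrix.mul_smul, mul_vecMulVec]
    have h3 : (t • vecMulVec x y)ᵀ * F12ᵀ = t • vecMulVec y y := by
      rw [← transpose_mul, h2, transpose_smul, transpose_vecMulVec]
    rw [Matrix.mul_assoc, h1, h2, h3, Matrix.mul_zero, zero_add]
    simp only [Matrix.mul_add, trace_add, Matrix.mul_smul, trace_smul, mul_vecMulVec, trace_vecMulVec,
      smul_eq_mul]
    ring
  -- This `t` makes the affine function of `t` in `key` equal to `c - 1`.
  refine ⟨((c - 1 - (M * F11).trace) / (2 * ((M *ᵥ y) ⬝ᵥ y))) • vecMulVec x y, ?_⟩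
  rw [key]
  have h : 2 * ((c - 1 - (M * F11).trace) / (2 * ((M *ᵥ y) ⬝ᵥ y))) * ((M *ᵥ y) ⬝ᵥ y)
      = c - 1 - (M * F11).trace := by
    field_simp
  linarith
end

section
/- Let n be a positive integer, α ∈ (0,1] and σ ≥ 0 real numbers, and 𝒜, 𝒜1 real n×n matrices. Assume the spectral radius of the complexification of α • (𝒜 ⊗ 𝒜 + σ • (𝒜1 ⊗ 𝒜1)) is strictly less than 1, where ⊗ denotes the Kronecker product. Then for every real symmetric positive definite n×n matrix G3 there exists a unique real symmetric n×n matrix G11 satisfying G3 + α • 𝒜 G11 𝒜ᵀ + ασ • 𝒜1 G11 𝒜1ᵀ = G11, and this G11 is positive definite. -/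
/-!
The operator `T X = α 𝒜 X 𝒜ᵀ + ασ 𝒜1 X 𝒜1ᵀ` acts on vectorised matrices as multiplication by
`M = α (𝒜 ⊗ 𝒜 + σ 𝒜1 ⊗ 𝒜1)`, so by Gelfand's formula `ρ(M) < 1` gives `T ^ k X → 0` for every `X`
(`tendsto_lyapunovOp_pow`). Hence `T` has no nonzero fixed point, so `1 - T` is injective and, in
finite dimension, surjective: the equation `G3 + T G = G` has exactly one solution among all
matrices. Since `T` commutes with transposition, `Gᵀ` is also a solution, so `G` is symmetric.

For positivity, `T` preserves positive semidefiniteness (this is where `α, σ ≥ 0` enters), so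
induction on `k` via `G - T ^ (k+1) G = G3 + T (G - T ^ k G)` shows `G - T ^ k G ⪰ 0`. Letting
`k → ∞` gives `G ⪰ 0`, whence `G = G3 + T G ≻ 0`.
-/

open Matrix
open scoped Kronecker

open Filter Topology

/-- In a complex Banach algebra, Gelfand's formula makes the powers of an element of spectral radius
less than `1` decay geometrically. -/
lemma tendsto_pow_of_spectralRadius_lt_one {A : Type*} [NormedRing A] [NormedAlgebra ℂ A]
    [CompleteSpace A] {a : A} (ha : spectralRadius ℂ a < 1) :
    Tendsto (fun k : ℕ => a ^ k) atTop (𝓝 0) := by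
  obtain ⟨r, har, hr1⟩ := ENNReal.lt_iff_exists_nnreal_btwn.1 ha
  have hr1 : r < 1 := by exact_mod_cast hr1
  have hev := (spectrum.pow_nnnorm_pow_one_div_tendsto_nhds_spectralRadius a).eventually_lt_const har
  refine squeeze_zero_norm' (a := fun k : ℕ => (r : ℝ) ^ k) ?_
    (tendsto_pow_atTop_nhds_zero_of_lt_one r.2 hr1)
  filter_upwards [hev, eventually_gt_atTop 0] with k hk hk0
  have hk0' : (0 : ℝ) < k := by exact_mod_cast hk0
  have h : ((‖a ^ k‖₊ : ENNReal) ^ (1 / k : ℝ)) ^ (k : ℝ) ≤ (r : ENNReal) ^ (k : ℝ) :=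
    ENNReal.rpow_le_rpow hk.le hk0'.le
  rw [← ENNReal.rpow_mul, one_div_mul_cancel hk0'.ne', ENNReal.rpow_one,
    ENNReal.rpow_natCast] at h
  have hle : ‖a ^ k‖₊ ≤ r ^ k := by exact_mod_cast h
  exact_mod_cast hle

/-- A real matrix inherits the decay of its powers from its complexification by taking real parts. -/
lemma tendsto_matrix_pow {m : Type*} [Fintype m] [DecidableEq m] (M : Matrix m m ℝ)
    (hM : spectralRadius ℂ (M.map Complex.ofReal) < 1) :
    Tendsto (fun k : ℕ => M ^ k) atTop (𝓝 0) := by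
  -- Any submultiplicative norm will do: the limit concerns only the entrywise topology.
  let _ := Matrix.linftyOpNormedRing (n := m) (α := ℂ)
  let _ := Matrix.linftyOpNormedAlgebra (n := m) (R := ℂ) (α := ℂ)
  have h : Tendsto (fun k : ℕ => (M.map Complex.ofReal) ^ k) atTop (𝓝 0) :=
    tendsto_pow_of_spectralRadius_lt_one hM
  have hc : Continuous fun K : Matrix m m ℂ => K.map Complex.re :=
    continuous_id.matrix_map Complex.continuous_re
  have h2 := (hc.tendsto 0).comp h
  have h0 : (0 : Matrix m m ℂ).map Complex.re = 0 := by ext; simp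
  rw [h0] at h2
  refine h2.congr fun k => ?_
  have hk : (M.map Complex.ofReal) ^ k = (M ^ k).map Complex.ofReal :=
    (map_pow Complex.ofRealHom.mapMatrix M k).symm
  ext i j
  simp [hk]

/-- The generalized Lyapunov operator `X ↦ a 𝒜 X 𝒜ᵀ + b ℬ X ℬᵀ`. -/
def lyapunovOp {n : ℕ} (a b : ℝ) (𝒜 ℬ : Matrix (Fin n) (Fin n) ℝ) :
    Module.End ℝ (Matrix (Fin n) (Fin n) ℝ) where
  toFun X := a • (𝒜 * X * 𝒜ᵀ) + b • (ℬ * X * ℬᵀ)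
  map_add' X Y := by simp only [mul_add, add_mul, smul_add]; abel
  map_smul' c X := by
    simp only [Matrix.mul_smul, Matrix.smul_mul, smul_add, RingHom.id_apply, smul_comm c]

lemma lyapunovOp_apply {n : ℕ} (a b : ℝ) (𝒜 ℬ X : Matrix (Fin n) (Fin n) ℝ) :
    lyapunovOp a b 𝒜 ℬ X = a • (𝒜 * X * 𝒜ᵀ) + b • (ℬ * X * ℬᵀ) := rfl

/-- Column-stacking turns the operator into its Kronecker-product matrix. -/
lemma vec_lyapunovOp {n : ℕ} (α σ : ℝ) (𝒜 ℬ X : Matrix (Fin n) (Fin n) ℝ) :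
    vec (lyapunovOp α (α * σ) 𝒜 ℬ X) = (α • (𝒜 ⊗ₖ 𝒜 + σ • (ℬ ⊗ₖ ℬ))) *ᵥ vec X := by
  simp only [lyapunovOp_apply, vec_add, vec_smul, ← kronecker_mulVec_vec, smul_mulVec, add_mulVec,
    smul_add, mul_smul]

lemma vec_lyapunovOp_pow {n : ℕ} (α σ : ℝ) (𝒜 ℬ X : Matrix (Fin n) (Fin n) ℝ) (k : ℕ) :
    vec ((lyapunovOp α (α * σ) 𝒜 ℬ ^ k) X) = (α • (𝒜 ⊗ₖ 𝒜 + σ • (ℬ ⊗ₖ ℬ))) ^ k *ᵥ vec X := by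
  induction k with
  | zero => simp
  | succ k ih => rw [pow_succ', pow_succ', Module.End.mul_apply, vec_lyapunovOp, ih, mulVec_mulVec]

lemma tendsto_lyapunovOp_pow {n : ℕ} (α σ : ℝ) (𝒜 ℬ : Matrix (Fin n) (Fin n) ℝ)
    (hρ : spectralRadius ℂ ((α • (𝒜 ⊗ₖ 𝒜 + σ • (ℬ ⊗ₖ ℬ))).map Complex.ofReal) < 1)
    (X : Matrix (Fin n) (Fin n) ℝ) :
    Tendsto (fun k : ℕ => (lyapunovOp α (α * σ) 𝒜 ℬ ^ k) X) atTop (𝓝 0) := by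
  have hc : Continuous fun K : Matrix (Fin n × Fin n) (Fin n × Fin n) ℝ => K *ᵥ vec X :=
    continuous_id.matrix_mulVec continuous_const
  have h := (hc.tendsto 0).comp (tendsto_matrix_pow _ hρ)
  rw [zero_mulVec] at h
  -- `vec X (j, i) = X i j`, which is why the indices are swapped.
  refine tendsto_pi_nhds.2 fun i => tendsto_pi_nhds.2 fun j => ?_
  refine (tendsto_pi_nhds.1 h (j, i)).congr fun k => ?_
  exact (congrFun (vec_lyapunovOp_pow α σ 𝒜 ℬ X k) (j, i)).symm

lemma lyapunovOp_transpose {n : ℕ} (a b : ℝ) (𝒜 ℬ X : Matrix (Fin n) (Fin n) ℝ) :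
    (lyapunovOp a b 𝒜 ℬ X)ᵀ = lyapunovOp a b 𝒜 ℬ Xᵀ := by
  simp [lyapunovOp_apply, Matrix.mul_assoc]

lemma lyapunovOp_posSemidef {n : ℕ} {a b : ℝ} (ha : 0 ≤ a) (hb : 0 ≤ b)
    (𝒜 ℬ : Matrix (Fin n) (Fin n) ℝ) {X : Matrix (Fin n) (Fin n) ℝ} (hX : X.PosSemidef) :
    (lyapunovOp a b 𝒜 ℬ X).PosSemidef := by
  have h (C : Matrix (Fin n) (Fin n) ℝ) : (C * X * Cᵀ).PosSemidef := by
    simpa only [conjTranspose_eq_transpose_of_trivial] using hX.mul_mul_conjTranspose_same C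
  exact ((h 𝒜).smul ha).add ((h ℬ).smul hb)

lemma posSemidef_of_tendsto {n : ℕ} {X : ℕ → Matrix (Fin n) (Fin n) ℝ}
    {Y : Matrix (Fin n) (Fin n) ℝ} (hX : ∀ k, (X k).PosSemidef)
    (h : Tendsto X atTop (𝓝 Y)) : Y.PosSemidef := by
  refine PosSemidef.of_dotProduct_mulVec_nonneg ?_ fun x => ?_
  · have ht : Tendsto (fun k => (X k)ᴴ) atTop (𝓝 Yᴴ) :=
      (continuous_id.matrix_conjTranspose.tendsto Y).comp h
    exact tendsto_nhds_unique (ht.congr fun k => (hX k).isHermitian) h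
  · have hc : Continuous fun K : Matrix (Fin n) (Fin n) ℝ => star x ⬝ᵥ (K *ᵥ x) :=
      continuous_const.dotProduct (continuous_id.matrix_mulVec continuous_const)
    exact ge_of_tendsto' ((hc.tendsto Y).comp h) fun k => (hX k).dotProduct_mulVec_nonneg x

theorem stationarity_lyapunov_solvable {n : ℕ} (hn : 0 < n)
    (α σ : ℝ) (hα : α ∈ Set.Ioc (0 : ℝ) 1) (hσ : 0 ≤ σ)
    (𝒜 𝒜1 : Matrix (Fin n) (Fin n) ℝ)
    (hρ : spectralRadius ℂ ((α • (𝒜 ⊗ₖ 𝒜 + σ • (𝒜1 ⊗ₖ 𝒜1))).map Complex.ofReal) < 1) :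
    ∀ G3 : Matrix (Fin n) (Fin n) ℝ, G3.PosDef →
      ∃ G11 : Matrix (Fin n) (Fin n) ℝ, G11.IsSymm ∧ G11.PosDef ∧
        G3 + α • (𝒜 * G11 * 𝒜ᵀ) + (α * σ) • (𝒜1 * G11 * 𝒜1ᵀ) = G11 ∧
        ∀ G11' : Matrix (Fin n) (Fin n) ℝ, G11'.IsSymm →
          G3 + α • (𝒜 * G11' * 𝒜ᵀ) + (α * σ) • (𝒜1 * G11' * 𝒜1ᵀ) = G11' → G11' = G11 := by
  intro G3 hG3
  set T := lyapunovOp α (α * σ) 𝒜 𝒜1 with hT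
  have hlim : ∀ X, Tendsto (fun k : ℕ => (T ^ k) X) atTop (𝓝 0) :=
    tendsto_lyapunovOp_pow α σ 𝒜 𝒜1 hρ
  have hinj : Function.Injective (1 - T : Module.End ℝ (Matrix (Fin n) (Fin n) ℝ)) := by
    rw [injective_iff_map_eq_zero]
    intro D hD
    have hfix : T D = D := (sub_eq_zero.1 hD).symm
    have hpow (k : ℕ) : (T ^ k) D = D := by
      rw [Module.End.pow_apply, Function.iterate_fixed hfix]
    exact tendsto_nhds_unique (tendsto_const_nhds.congr fun k => (hpow k).symm) (hlim D)
  have hiff (G : Matrix (Fin n) (Fin n) ℝ) : G3 + T G = G ↔ (1 - T) G = G3 := by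
    rw [LinearMap.sub_apply, Module.End.one_apply, sub_eq_iff_eq_add, eq_comm]
  obtain ⟨G, hG⟩ := LinearMap.injective_iff_surjective.1 hinj G3
  have huniq (G' : Matrix (Fin n) (Fin n) ℝ) (h : G3 + T G' = G') : G' = G :=
    hinj (((hiff G').1 h).trans hG.symm)
  have hG := (hiff G).2 hG
  have hG3s : G3ᵀ = G3 := by
    simpa only [conjTranspose_eq_transpose_of_trivial] using hG3.isHermitian.eq
  have hsymm : Gᵀ = G := huniq _ <| by
    conv_rhs => rw [← hG, transpose_add, hG3s, hT, lyapunovOp_transpose]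
  have hTpos {X : Matrix (Fin n) (Fin n) ℝ} (hX : X.PosSemidef) : (T X).PosSemidef :=
    lyapunovOp_posSemidef hα.1.le (mul_nonneg hα.1.le hσ) 𝒜 𝒜1 hX
  have hpartial (k : ℕ) : (G - (T ^ k) G).PosSemidef := by
    induction k with
    | zero => simpa using PosSemidef.zero
    | succ k ih =>
      have hstep : G - (T ^ (k + 1)) G = G3 + T (G - (T ^ k) G) := by
        rw [map_sub, ← add_sub_assoc, hG, pow_succ', Module.End.mul_apply]
      rw [hstep]
      exact hG3.posSemidef.add (hTpos ih)
  have hpsd : G.PosSemidef := posSemidef_of_tendsto hpartial <| by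
    simpa using (tendsto_const_nhds (x := G)).sub (hlim G)
  have hpd : G.PosDef := hG ▸ hG3.add_posSemidef (hTpos hpsd)
  refine ⟨G, hsymm, hpd, ?_, fun G' _ h => huniq G' ?_⟩
  · rwa [hT, lyapunovOp_apply, ← add_assoc] at hG
  · rwa [hT, lyapunovOp_apply, ← add_assoc]
end

section
/- Let n be a positive integer, σ > 0 a real number, and M, M1 real n×n matrices. Then the spectral radius of the complexification of M ⊗ M + σ • (M1 ⊗ M1) is strictly less than 1 if and only if for every real symmetric positive definite n×n matrix Y there exists a unique real symmetric positive definite n×n matrix G such that Mᵀ G M + σ • M1ᵀ G M1 + Y = G. -/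
/-!
Write `T G = Mᵀ G M + σ M₁ᵀ G M₁` and `K = M ⊗ M + σ (M₁ ⊗ M₁)`. Flattening a matrix to a vector
indexed by pairs turns `T` into right multiplication by `K` (`uncurry_steinMap_pow`), so the powers
of `K` tend to zero exactly when `T ^ k X → 0` for every `X`. By Gelfand's formula the former is
equivalent to the spectral radius of `K` being less than one
(`spectralRadius_lt_one_iff_tendsto_pow`). It remains to compare `T ^ k → 0` with solvability of
`T G + Y = G`, using that `T` preserves positive semidefiniteness.

If `T ^ k → 0`, then `1 - T` has trivial kernel, hence is bijective; the solution `G` is symmetric by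
uniqueness, `G - T ^ k G` is positive semidefinite for all `k`, and letting `k → ∞` so is `G`;
then `G = T G + Y` is positive definite.

Conversely, solve `T G + 1 = G`. The sums `∑_{j < k} vᵀ T ^ j(1) v` telescope and are bounded by
`vᵀ G v`, so `vᵀ T ^ k(1) v → 0`. The domination `|uᵀ X v| ≤ uᵀ Z u + vᵀ Z v` passes from `(X, Z)` to
`(T X, T Z)`, and it holds for `X` a matrix unit and `Z = 1`. Hence `T ^ k X → 0` for every matrix
unit `X`, including its antisymmetric part, which the order on symmetric matrices does not see.
-/

open Matrix
open scoped Kronecker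
open Filter Topology

section PowTendsto

/-- In a complex Banach algebra, the spectral radius is less than one exactly when the powers
tend to zero. -/
theorem spectralRadius_lt_one_iff_tendsto_pow {A : Type*} [NormedRing A] [NormedAlgebra ℂ A]
    [CompleteSpace A] [NormOneClass A] (a : A) :
    spectralRadius ℂ a < 1 ↔ Tendsto (fun k : ℕ => a ^ k) atTop (𝓝 0) := by
  constructor
  · intro h
    obtain ⟨r, hr, hr1⟩ := ENNReal.lt_iff_exists_nnreal_btwn.1 h
    have hr1' : r < 1 := by exact_mod_cast hr1
    have hev := (spectrum.pow_nnnorm_pow_one_div_tendsto_nhds_spectralRadius a).eventually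
      (gt_mem_nhds hr)
    have hpow : Tendsto (fun k : ℕ => (r : ℝ) ^ k) atTop (𝓝 0) :=
      tendsto_pow_atTop_nhds_zero_of_lt_one r.2 (by exact_mod_cast hr1')
    refine squeeze_zero_norm' ?_ hpow
    filter_upwards [hev, eventually_ge_atTop 1] with k hk hk1
    have hk0 : (0 : ℝ) < k := by exact_mod_cast hk1
    have h2 : ((‖a ^ k‖₊ : ENNReal)) ≤ (r : ENNReal) ^ k := by
      have := ENNReal.rpow_le_rpow hk.le hk0.le
      rwa [← ENNReal.rpow_mul, one_div, inv_mul_cancel₀ hk0.ne', ENNReal.rpow_one,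
        ENNReal.rpow_natCast] at this
    exact_mod_cast h2
  · intro h
    have h0 : Tendsto (fun k : ℕ => ‖a ^ k‖) atTop (𝓝 0) := by simpa using h.norm
    obtain ⟨k, hk, hk1⟩ := ((h0.eventually (gt_mem_nhds one_pos)).and
      (eventually_ge_atTop 1)).exists
    have h1 : spectralRadius ℂ a ^ k < 1 :=
      calc spectralRadius ℂ a ^ k ≤ spectralRadius ℂ (a ^ k) :=
            spectrum.spectralRadius_pow_le a k (by omega)
        _ ≤ ‖a ^ k‖₊ := spectrum.spectralRadius_le_nnnorm _
        _ < 1 := by exact_mod_cast hk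
    by_contra! hge
    exact absurd h1 (not_lt.2 (one_le_pow₀ hge))

attribute [local instance] Matrix.linftyOpNormedRing Matrix.linftyOpNormedAlgebra

/-- For a real matrix, the condition on its complex spectrum is equivalent to entrywise decay of its
real powers; the choice of a submultiplicative norm inducing the product topology is immaterial. -/
theorem spectralRadius_map_lt_one_iff {ι : Type*} [Fintype ι] [DecidableEq ι] [Nonempty ι]
    (K : Matrix ι ι ℝ) :
    spectralRadius ℂ (K.map Complex.ofReal) < 1 ↔
      ∀ p q, Tendsto (fun k : ℕ => (K ^ k) p q) atTop (𝓝 0) := by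
  have hmap : ∀ k : ℕ, (K.map Complex.ofReal) ^ k = (K ^ k).map Complex.ofReal := fun k =>
    (map_pow (Complex.ofRealHom.mapMatrix (m := ι)) K k).symm
  have hpi : Tendsto (fun k : ℕ => (K.map Complex.ofReal) ^ k) atTop (𝓝 0) ↔
      ∀ p q, Tendsto (fun k : ℕ => ((K.map Complex.ofReal) ^ k) p q) atTop (𝓝 0) := by
    refine tendsto_pi_nhds.trans (forall_congr' fun p => ?_)
    exact tendsto_pi_nhds
  refine (spectralRadius_lt_one_iff_tendsto_pow _).trans (hpi.trans ?_)
  refine forall₂_congr fun p q => ?_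
  simp only [hmap, Matrix.map_apply]
  rw [← Complex.ofReal_zero]
  exact Complex.isUniformEmbedding_ofReal.isEmbedding.tendsto_nhds_iff.symm

end PowTendsto

section Stein

variable {n : ℕ}

/-- The linear map `G ↦ Mᵀ G M + σ M₁ᵀ G M₁` on real square matrices. -/
noncomputable def steinMap (σ : ℝ) (M M1 : Matrix (Fin n) (Fin n) ℝ) :
    Matrix (Fin n) (Fin n) ℝ →ₗ[ℝ] Matrix (Fin n) (Fin n) ℝ where
  toFun G := Mᵀ * G * M + σ • (M1ᵀ * G * M1)
  map_add' G H := by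
    simp only [Matrix.mul_add, Matrix.add_mul, smul_add]; abel
  map_smul' c G := by
    simp only [Matrix.mul_smul, Matrix.smul_mul, smul_add, RingHom.id_apply, smul_comm σ c]

theorem steinMap_apply (σ : ℝ) (M M1 G : Matrix (Fin n) (Fin n) ℝ) :
    steinMap σ M M1 G = Mᵀ * G * M + σ • (M1ᵀ * G * M1) := rfl

/-- Flattened to a row vector indexed by pairs, `steinMap` is multiplication by the Kronecker
matrix; the transposes in `Mᵀ X M` are absorbed by acting on row vectors. -/
theorem uncurry_steinMap (σ : ℝ) (M M1 X : Matrix (Fin n) (Fin n) ℝ) :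
    Function.uncurry (steinMap σ M M1 X) =
      Function.uncurry X ᵥ* (M ⊗ₖ M + σ • (M1 ⊗ₖ M1)) := by
  have key : ∀ (A : Matrix (Fin n) (Fin n) ℝ) (a b : Fin n),
      (Aᵀ * X * A) a b = (Function.uncurry X ᵥ* (A ⊗ₖ A)) (a, b) := by
    intro A a b
    simp only [Matrix.mul_apply, Matrix.transpose_apply, Matrix.vecMul, dotProduct,
      Fintype.sum_prod_type, Matrix.kroneckerMap_apply, Function.uncurry, Finset.sum_mul]
    rw [Finset.sum_comm]
    exact Finset.sum_congr rfl fun i _ => Finset.sum_congr rfl fun j _ => by ring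
  ext ⟨a, b⟩
  rw [Matrix.vecMul_add, Matrix.vecMul_smul]
  rw [Pi.add_apply, Pi.smul_apply, ← key, ← key]
  rfl

theorem uncurry_steinMap_pow (σ : ℝ) (M M1 : Matrix (Fin n) (Fin n) ℝ) (k : ℕ)
    (X : Matrix (Fin n) (Fin n) ℝ) :
    Function.uncurry ((steinMap σ M M1 ^ k) X) =
      Function.uncurry X ᵥ* (M ⊗ₖ M + σ • (M1 ⊗ₖ M1)) ^ k := by
  induction k with
  | zero => simp
  | succ k ih =>
    rw [pow_succ', Module.End.mul_apply, uncurry_steinMap, ih, Matrix.vecMul_vecMul, ← pow_succ]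

theorem tendsto_steinMap_pow {σ : ℝ} {M M1 : Matrix (Fin n) (Fin n) ℝ}
    (h : ∀ p q, Tendsto (fun k : ℕ => ((M ⊗ₖ M + σ • (M1 ⊗ₖ M1)) ^ k) p q) atTop (𝓝 0))
    (X : Matrix (Fin n) (Fin n) ℝ) (a b : Fin n) :
    Tendsto (fun k : ℕ => ((steinMap σ M M1 ^ k) X) a b) atTop (𝓝 0) := by
  have h1 : ∀ k : ℕ, ((steinMap σ M M1 ^ k) X) a b =
      ∑ p, Function.uncurry X p * ((M ⊗ₖ M + σ • (M1 ⊗ₖ M1)) ^ k) p (a, b) := fun k =>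
    congrFun (uncurry_steinMap_pow σ M M1 k X) (a, b)
  simp only [h1]
  simpa using tendsto_finsetSum Finset.univ fun p _ =>
    (h p (a, b)).const_mul (Function.uncurry X p)

/-- The entries of the powers of the Kronecker matrix are read off from the action of `steinMap` on
matrix units, so decay on matrix units suffices. -/
theorem kronecker_pow_apply (σ : ℝ) (M M1 : Matrix (Fin n) (Fin n) ℝ) (k : ℕ)
    (i j a b : Fin n) :
    ((M ⊗ₖ M + σ • (M1 ⊗ₖ M1)) ^ k) (i, j) (a, b) =
      ((steinMap σ M M1 ^ k) (Matrix.single i j 1)) a b := by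
  have h := congrFun (uncurry_steinMap_pow σ M M1 k (Matrix.single i j 1)) (a, b)
  have hs : Function.uncurry (Matrix.single i j (1 : ℝ)) = Pi.single (i, j) 1 := by
    ext ⟨c, d⟩
    simp [Function.uncurry, Matrix.single_apply, Pi.single_apply, Prod.ext_iff, eq_comm]
  rw [hs, Matrix.single_one_vecMul] at h
  exact h.symm

theorem dotProduct_steinMap (σ : ℝ) (M M1 X : Matrix (Fin n) (Fin n) ℝ) (u v : Fin n → ℝ) :
    u ⬝ᵥ (steinMap σ M M1 X *ᵥ v) =
      (M *ᵥ u) ⬝ᵥ (X *ᵥ (M *ᵥ v)) + σ * ((M1 *ᵥ u) ⬝ᵥ (X *ᵥ (M1 *ᵥ v))) := by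
  have key : ∀ A : Matrix (Fin n) (Fin n) ℝ,
      u ⬝ᵥ ((Aᵀ * X * A) *ᵥ v) = (A *ᵥ u) ⬝ᵥ (X *ᵥ (A *ᵥ v)) := by
    intro A
    rw [← Matrix.mulVec_mulVec, ← Matrix.mulVec_mulVec, Matrix.dotProduct_mulVec u Aᵀ,
      Matrix.vecMul_transpose]
  rw [steinMap_apply, Matrix.add_mulVec, Matrix.smul_mulVec, dotProduct_add, dotProduct_smul,
    key, key, smul_eq_mul]

theorem steinMap_transpose (σ : ℝ) (M M1 X : Matrix (Fin n) (Fin n) ℝ) :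
    (steinMap σ M M1 X)ᵀ = steinMap σ M M1 Xᵀ := by
  simp [steinMap_apply, Matrix.mul_assoc]

theorem steinMap_posSemidef {σ : ℝ} (hσ : 0 < σ) (M M1 : Matrix (Fin n) (Fin n) ℝ)
    {X : Matrix (Fin n) (Fin n) ℝ} (hX : X.PosSemidef) : (steinMap σ M M1 X).PosSemidef := by
  have h1 := hX.conjTranspose_mul_mul_same M
  have h2 := hX.conjTranspose_mul_mul_same M1
  rw [Matrix.conjTranspose_eq_transpose_of_trivial] at h1 h2
  exact h1.add (h2.smul hσ.le)

theorem steinMap_pow_posSemidef {σ : ℝ} (hσ : 0 < σ) (M M1 : Matrix (Fin n) (Fin n) ℝ)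
    {X : Matrix (Fin n) (Fin n) ℝ} (hX : X.PosSemidef) (k : ℕ) :
    ((steinMap σ M M1 ^ k) X).PosSemidef := by
  induction k with
  | zero => simpa using hX
  | succ k ih =>
    rw [pow_succ', Module.End.mul_apply]
    exact steinMap_posSemidef hσ M M1 ih

/-- Domination of the bilinear form of `X` by the quadratic form of `Z` is preserved by `steinMap`,
since each summand only substitutes `A u, A v` for `u, v`. -/
theorem steinMap_pow_dominated {σ : ℝ} (hσ : 0 < σ) (M M1 : Matrix (Fin n) (Fin n) ℝ)
    {X Z : Matrix (Fin n) (Fin n) ℝ}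
    (h : ∀ u v : Fin n → ℝ, |u ⬝ᵥ (X *ᵥ v)| ≤ u ⬝ᵥ (Z *ᵥ u) + v ⬝ᵥ (Z *ᵥ v)) (k : ℕ)
    (u v : Fin n → ℝ) :
    |u ⬝ᵥ ((steinMap σ M M1 ^ k) X *ᵥ v)| ≤
      u ⬝ᵥ ((steinMap σ M M1 ^ k) Z *ᵥ u) + v ⬝ᵥ ((steinMap σ M M1 ^ k) Z *ᵥ v) := by
  induction k generalizing u v with
  | zero => simpa using h u v
  | succ k ih =>
    simp only [pow_succ', Module.End.mul_apply, dotProduct_steinMap]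
    refine (abs_add_le _ _).trans ?_
    rw [abs_mul, abs_of_pos hσ]
    have h1 := ih (M *ᵥ u) (M *ᵥ v)
    have h2 := mul_le_mul_of_nonneg_left (ih (M1 *ᵥ u) (M1 *ᵥ v)) hσ.le
    linarith

theorem existsUnique_of_tendsto {σ : ℝ} (hσ : 0 < σ) {M M1 : Matrix (Fin n) (Fin n) ℝ}
    (hT : ∀ X a b, Tendsto (fun k : ℕ => ((steinMap σ M M1 ^ k) X) a b) atTop (𝓝 0))
    {Y : Matrix (Fin n) (Fin n) ℝ} (hY : Y.PosDef) :
    ∃! G : Matrix (Fin n) (Fin n) ℝ, G.PosDef ∧ steinMap σ M M1 G + Y = G := by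
  set T := steinMap σ M M1 with hTdef
  have hinj : Function.Injective
      ((LinearMap.id : Matrix (Fin n) (Fin n) ℝ →ₗ[ℝ] Matrix (Fin n) (Fin n) ℝ) - T) := by
    rw [injective_iff_map_eq_zero]
    intro D hD
    have hD : T D = D := (sub_eq_zero.1 hD).symm
    have hk : ∀ k : ℕ, (T ^ k) D = D := by
      intro k
      induction k with
      | zero => simp
      | succ k ih => rw [pow_succ, Module.End.mul_apply, hD, ih]
    ext a b
    refine tendsto_nhds_unique ?_ (hT D a b)
    simp only [hk, tendsto_const_nhds]
  have huniq : ∀ G H, T G + Y = G → T H + Y = H → G = H := by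
    intro G H hG hH
    apply hinj
    simp only [LinearMap.sub_apply, LinearMap.id_apply]
    rw [← eq_sub_iff_add_eq'.2 hG, ← eq_sub_iff_add_eq'.2 hH]
  obtain ⟨G, hG⟩ := (LinearMap.injective_iff_surjective.1 hinj) Y
  have hG : T G + Y = G := by
    rw [← hG]; simp
  have hYsymm : Yᵀ = Y := by
    simpa [Matrix.conjTranspose_eq_transpose_of_trivial] using hY.isHermitian.eq
  have hsymm : Gᵀ = G := by
    refine huniq _ _ ?_ hG
    rw [hTdef, ← steinMap_transpose, ← hTdef]
    nth_rw 1 [← hYsymm]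
    rw [← Matrix.transpose_add, hG]
  -- `G` is bounded below by `T ^ k G`, which tends to zero.
  have hge : ∀ k : ℕ, (G - (T ^ k) G).PosSemidef := by
    intro k
    induction k with
    | zero => simpa using Matrix.PosSemidef.zero
    | succ k ih =>
      have h : G - (T ^ (k + 1)) G = Y + T (G - (T ^ k) G) := by
        rw [pow_succ', Module.End.mul_apply, map_sub]
        nth_rw 1 [← hG]
        abel
      rw [h]
      exact hY.posSemidef.add (steinMap_posSemidef hσ M M1 ih)
  have hpsd : G.PosSemidef := by
    refine Matrix.PosSemidef.of_dotProduct_mulVec_nonneg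
      (by rw [Matrix.IsHermitian, Matrix.conjTranspose_eq_transpose_of_trivial, hsymm])
      fun v => ?_
    have hlim : Tendsto (fun k : ℕ => star v ⬝ᵥ ((T ^ k) G *ᵥ v)) atTop (𝓝 0) := by
      simp only [dotProduct, Matrix.mulVec]
      simpa using tendsto_finsetSum Finset.univ fun a _ =>
        (tendsto_finsetSum Finset.univ fun b _ => (hT G a b).mul_const (v b)).const_mul (star v a)
    refine le_of_tendsto' hlim fun k => ?_
    have := (hge k).dotProduct_mulVec_nonneg v
    rwa [Matrix.sub_mulVec, dotProduct_sub, sub_nonneg] at this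
  refine ⟨G, ⟨?_, hG⟩, fun H hH => huniq H G hH.2 hG⟩
  rw [← hG]
  exact Matrix.PosDef.posSemidef_add (steinMap_posSemidef hσ M M1 hpsd) hY

/-- A single solution of the Stein equation with right-hand side `1` forces decay of `steinMap ^ k`
on every matrix unit, symmetric or not. -/
theorem tendsto_of_solution {σ : ℝ} (hσ : 0 < σ) {M M1 G : Matrix (Fin n) (Fin n) ℝ}
    (hG : G.PosSemidef) (hEq : steinMap σ M M1 G + 1 = G) (i j a b : Fin n) :
    Tendsto (fun k : ℕ => ((steinMap σ M M1 ^ k) (Matrix.single i j 1)) a b) atTop (𝓝 0) := by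
  set T := steinMap σ M M1 with hTdef
  have hone : ∀ v : Fin n → ℝ,
      Tendsto (fun k : ℕ => v ⬝ᵥ ((T ^ k) 1 *ᵥ v)) atTop (𝓝 0) := by
    intro v
    have hnn : ∀ k, 0 ≤ v ⬝ᵥ ((T ^ k) 1 *ᵥ v) := fun k => by
      simpa using
        (steinMap_pow_posSemidef hσ M M1 Matrix.PosSemidef.one k).dotProduct_mulVec_nonneg v
    have hstep : ∀ k, v ⬝ᵥ ((T ^ k) 1 *ᵥ v) =
        v ⬝ᵥ ((T ^ k) G *ᵥ v) - v ⬝ᵥ ((T ^ (k + 1)) G *ᵥ v) := by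
      intro k
      have h1 : (1 : Matrix (Fin n) (Fin n) ℝ) = G - T G := (sub_eq_of_eq_add' hEq.symm).symm
      rw [h1, map_sub, Matrix.sub_mulVec, dotProduct_sub, pow_succ, Module.End.mul_apply]
    refine (summable_of_sum_range_le (c := v ⬝ᵥ (G *ᵥ v)) hnn fun N => ?_).tendsto_atTop_zero
    simp only [hstep]
    rw [Finset.sum_range_sub' (fun k => v ⬝ᵥ ((T ^ k) G *ᵥ v))]
    have := (steinMap_pow_posSemidef hσ M M1 hG N).dotProduct_mulVec_nonneg v
    simp only [star_trivial] at this
    simpa using this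
  have hdom : ∀ u v : Fin n → ℝ, |u ⬝ᵥ (Matrix.single i j (1 : ℝ) *ᵥ v)| ≤
      u ⬝ᵥ ((1 : Matrix (Fin n) (Fin n) ℝ) *ᵥ u) + v ⬝ᵥ ((1 : Matrix (Fin n) (Fin n) ℝ) *ᵥ v) := by
    intro u v
    have h1 : u ⬝ᵥ (Matrix.single i j (1 : ℝ) *ᵥ v) = u i * v j := by
      simp [Matrix.single_mulVec, dotProduct, Function.update_apply]
    have hu : u i * u i ≤ u ⬝ᵥ u :=
      Finset.single_le_sum (f := fun i => u i * u i) (fun i _ => mul_self_nonneg _)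
        (Finset.mem_univ i)
    have hv : v j * v j ≤ v ⬝ᵥ v :=
      Finset.single_le_sum (f := fun i => v i * v i) (fun i _ => mul_self_nonneg _)
        (Finset.mem_univ j)
    rw [h1, Matrix.one_mulVec, Matrix.one_mulVec, abs_le]
    constructor <;> nlinarith [sq_nonneg (u i + v j), sq_nonneg (u i - v j)]
  have hlim := (hone (Pi.single a 1)).add (hone (Pi.single b 1))
  rw [add_zero] at hlim
  refine squeeze_zero_norm (fun k => ?_) hlim
  have := steinMap_pow_dominated hσ M M1 hdom k (Pi.single a 1) (Pi.single b 1)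
  simpa using this

end Stein

theorem spectral_radius_lt_one_iff_stein_solvable {n : ℕ} (hn : 0 < n)
    (σ : ℝ) (hσ : 0 < σ) (M M1 : Matrix (Fin n) (Fin n) ℝ) :
    spectralRadius ℂ ((M ⊗ₖ M + σ • (M1 ⊗ₖ M1)).map Complex.ofReal) < 1 ↔
      ∀ Y : Matrix (Fin n) (Fin n) ℝ, Y.PosDef →
        ∃! G : Matrix (Fin n) (Fin n) ℝ, G.PosDef ∧
          Mᵀ * G * M + σ • (M1ᵀ * G * M1) + Y = G := by
  have : Nonempty (Fin n) := ⟨⟨0, hn⟩⟩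
  rw [spectralRadius_map_lt_one_iff]
  constructor
  · intro h Y hY
    exact existsUnique_of_tendsto hσ (tendsto_steinMap_pow h) hY
  · rintro h ⟨i, j⟩ ⟨a, b⟩
    obtain ⟨G, ⟨hG, hEq⟩, -⟩ := h 1 Matrix.PosDef.one
    simp only [kronecker_pow_apply]
    exact tendsto_of_solution hσ hG.posSemidef hEq i j a b
end
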